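/- Let Λ ⊂ ℝ^n be a full-rank lattice, σ_s, σ_w > 0, α = σ_s²/(σ_s²+σ_w²) and σ_eff² = σ_s²σ_w²/(σ_s²+σ_w²). Let X ~ D_{Λ, σ_s} and W ~ N(0, σ_w² I_n) be independent, and let P_e(Λ) = Pr[(α−1)X + αW ∉ V(Λ)]. Then P_e(Λ) · f_{σ_s}(Λ) = ∫_{V(Λ)} f_{σ_eff}((Λ∖{0}) + w) · f_{√α·σ_s}(Λ + w) dw. -/

import Mathlib

open MeasureTheory Real Filter Pointwise
open scoped ENNReal RealInnerProductSpace

noncomputable section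

/-- The (continuous) Gaussian density with parameter `σ` on `ℝⁿ`:
`f_σ(x) = (2πσ²)^{-n/2} exp(-‖x‖²/(2σ²))`. -/
def gaussF (n : ℕ) (σ : ℝ) (x : EuclideanSpace ℝ (Fin n)) : ℝ :=
  (2 * π * σ ^ 2) ^ (-(n : ℝ) / 2) * Real.exp (-‖x‖ ^ 2 / (2 * σ ^ 2))

/-- The Gaussian mass `f_σ(S) = Σ_{y ∈ S} f_σ(y)` of a (countable) set `S ⊆ ℝⁿ`. -/
def gaussMass (n : ℕ) (σ : ℝ) (S : Set (EuclideanSpace ℝ (Fin n))) : ℝ :=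
  ∑' y : S, gaussF n σ y

/-- The Gaussian measure `N(0, σ² Iₙ)` on `ℝⁿ`, given by its density w.r.t. Lebesgue measure. -/
def gaussMeasure (n : ℕ) (σ : ℝ) : Measure (EuclideanSpace ℝ (Fin n)) :=
  volume.withDensity fun x => ENNReal.ofReal (gaussF n σ x)

/-- The coset `S + t` of a set `S ⊆ ℝⁿ`, i.e. `{x | x - t ∈ S}`. -/
def coset (n : ℕ) (S : Set (EuclideanSpace ℝ (Fin n))) (t : EuclideanSpace ℝ (Fin n)) :
    Set (EuclideanSpace ℝ (Fin n)) := {x | x - t ∈ S}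

/-- The Voronoi cell of `S`: `{x | ⟪x,y⟫ ≤ ‖y‖²/2 for all y ∈ S}`. -/
def voronoi (n : ℕ) (S : Set (EuclideanSpace ℝ (Fin n))) : Set (EuclideanSpace ℝ (Fin n)) :=
  {x | ∀ y ∈ S, ⟪x, y⟫ ≤ ‖y‖ ^ 2 / 2}

/-- The inverse error function `err⁻¹_ε(Λ)`: the least `s > 0` such that a standard Gaussian
leaves `s · V(Λ)` with probability at most `ε`. -/
def errInv (n : ℕ) (ε : ℝ) (S : Set (EuclideanSpace ℝ (Fin n))) : ℝ :=
  sInf {s : ℝ | 0 < s ∧ gaussMeasure n 1 ((s • voronoi n S)ᶜ) ≤ ENNReal.ofReal ε}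

/-- The Shannon entropy (in nats) of the discrete Gaussian `D_{S,σ}` supported on `S`,
which assigns mass `f_σ(y)/f_σ(S)` to each `y ∈ S`. -/
def dgEntropy (n : ℕ) (σ : ℝ) (S : Set (EuclideanSpace ℝ (Fin n))) : ℝ :=
  -∑' y : S, (gaussF n σ y / gaussMass n σ S) * Real.log (gaussF n σ y / gaussMass n σ S)

/-- The flatness factor `ε_Λ(σ) = sup_{x ∈ V(Λ)} |V(Λ)·f_σ(Λ+x) − 1|`. -/
def flatness (n : ℕ) (L : Submodule ℤ (EuclideanSpace ℝ (Fin n))) (σ : ℝ) : ℝ :=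
  ⨆ x : voronoi n (L : Set (EuclideanSpace ℝ (Fin n))),
    |ZLattice.covolume L volume *
        gaussMass n σ (coset n (L : Set (EuclideanSpace ℝ (Fin n))) x) - 1|

abbrev EE (n : ℕ) := EuclideanSpace ℝ (Fin n)

lemma gaussF_nonneg (n : ℕ) (σ : ℝ) (x : EE n) : 0 ≤ gaussF n σ x := by
  unfold gaussF; positivity

lemma gaussF_pos (n : ℕ) (σ : ℝ) (hσ : 0 < σ) (x : EE n) : 0 < gaussF n σ x := by
  unfold gaussF; positivity

lemma gaussF_cont (n : ℕ) (σ : ℝ) : Continuous (gaussF n σ) := by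
  unfold gaussF; fun_prop

lemma gaussF_integrable (n : ℕ) (σ : ℝ) (hσ : 0 < σ) : Integrable (gaussF n σ) := by
  unfold gaussF
  apply Integrable.const_mul
  have hb : 0 < (2 * σ ^ 2)⁻¹ := by positivity
  have h := GaussianFourier.integral_rexp_neg_mul_sq_norm (V := EE n) hb
  have h2 : Integrable fun v : EE n => Real.exp (-(2 * σ ^ 2)⁻¹ * ‖v‖ ^ 2) := by
    apply Integrable.of_integral_ne_zero
    rw [h]
    positivity
  refine h2.congr (Eventually.of_forall fun v => ?_)
  change Real.exp _ = Real.exp _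
  congr 1
  field_simp

lemma gaussF_le (n : ℕ) (σ : ℝ) (x : EE n) : gaussF n σ x ≤ (2 * π * σ ^ 2) ^ (-(n : ℝ) / 2) := by
  unfold gaussF
  apply mul_le_of_le_one_right (by positivity)
  rw [Real.exp_le_one_iff, neg_div]
  exact neg_nonpos.2 (by positivity)

/-- Extended-valued mass of `S + w`. -/
def gMass (n : ℕ) (σ : ℝ) (S : Set (EE n)) (w : EE n) : ℝ≥0∞ :=
  ∑' x : S, ENNReal.ofReal (gaussF n σ (x + w))

lemma gaussMass_eq (n : ℕ) (σ : ℝ) (S : Set (EE n)) (w : EE n) :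
    gaussMass n σ (coset n S w) = (gMass n σ S w).toReal := by
  unfold gaussMass gMass
  rw [ENNReal.tsum_toReal_eq (fun _ => ENNReal.ofReal_ne_top)]
  simp only [ENNReal.toReal_ofReal (gaussF_nonneg n σ _)]
  let e : S ≃ coset n S w :=
    { toFun := fun x => ⟨x + w, by simp [coset]⟩
      invFun := fun x => ⟨x - w, x.2⟩
      left_inv := fun x => by simp
      right_inv := fun x => by simp }
  exact (e.tsum_eq (fun y : coset n S w => gaussF n σ y)).symm

lemma summable_gaussF (n : ℕ) (L : Submodule ℤ (EE n)) [DiscreteTopology L]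
    (σ : ℝ) (hσ : 0 < σ) (w : EE n) :
    Summable fun x : L => gaussF n σ (x + w) := by
  unfold gaussF
  apply Summable.mul_left
  set m := Module.finrank ℤ L + 1 with hm
  have h := (ZLattice.summable_norm_sub_inv_pow L (2 * m) (by omega) (-w)).mul_left
    ((m.factorial : ℝ) * (2 * σ ^ 2) ^ m)
  refine Summable.of_norm_bounded_eventually h ?_
  have hfin : {x : L | (x : EE n) + w = 0}.Finite := by
    apply Set.Subsingleton.finite
    intro a ha b hb
    ext1
    have ha' : (a : EE n) + w = 0 := ha
    have hb' : (b : EE n) + w = 0 := hb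
    exact add_right_cancel (ha'.trans hb'.symm)
  filter_upwards [hfin.compl_mem_cofinite] with x hx
  have hx' : (x : EE n) + w ≠ 0 := hx
  have ht : 0 < ‖(x : EE n) + w‖ := norm_pos_iff.2 hx'
  rw [sub_neg_eq_add]
  set t := ‖(x : EE n) + w‖
  rw [Real.norm_of_nonneg (Real.exp_pos _).le, neg_div, Real.exp_neg]
  have hu : 0 < t ^ 2 / (2 * σ ^ 2) := by positivity
  have h1 := Real.pow_div_factorial_le_exp _ hu.le m
  calc (Real.exp (t ^ 2 / (2 * σ ^ 2)))⁻¹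
      ≤ ((t ^ 2 / (2 * σ ^ 2)) ^ m / m.factorial)⁻¹ := by
        apply inv_anti₀ _ h1
        positivity
    _ = _ := by
        rw [pow_mul, div_pow, inv_pow]
        rw [inv_pow]
        field_simp

lemma gMass_ne_top (n : ℕ) (L : Submodule ℤ (EE n)) [DiscreteTopology L]
    (σ : ℝ) (hσ : 0 < σ) (w : EE n) : gMass n σ (L : Set (EE n)) w ≠ ⊤ :=
  (summable_gaussF n L σ hσ w).tsum_ofReal_ne_top

lemma gMass_mono (n : ℕ) (σ : ℝ) {S T : Set (EE n)} (h : S ⊆ T) (w : EE n) :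
    gMass n σ S w ≤ gMass n σ T w :=
  ENNReal.tsum_mono_subtype (fun x => ENNReal.ofReal (gaussF n σ (x + w))) h

lemma gMass_meas (n : ℕ) (σ : ℝ) (S : Set (EE n)) [Countable S] :
    Measurable (gMass n σ S) := by
  unfold gMass
  refine Measurable.tsum fun x => ?_
  exact ENNReal.measurable_ofReal.comp ((gaussF_cont n σ).measurable.comp (by fun_prop))

lemma gMass_periodic (n : ℕ) (L : Submodule ℤ (EE n)) (σ : ℝ) (l : L) (w : EE n) :
    gMass n σ (L : Set (EE n)) (l + w) = gMass n σ (L : Set (EE n)) w := by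
  unfold gMass
  have := (Equiv.addRight l).tsum_eq
    (fun x : L => ENNReal.ofReal (gaussF n σ ((x : EE n) + w)))
  refine Eq.trans ?_ this
  refine tsum_congr fun x => ?_
  simp [add_assoc]

lemma voronoi_meas (n : ℕ) (S : Set (EE n)) : MeasurableSet (voronoi n S) := by
  have : voronoi n S = ⋂ y ∈ S, {x | ⟪x, y⟫ ≤ ‖y‖ ^ 2 / 2} := by
    ext x; simp [voronoi]
  rw [this]
  refine (isClosed_biInter fun y _ => ?_).measurableSet
  exact isClosed_le (by fun_prop) continuous_const

lemma hyperplane_null (n : ℕ) (y : EE n) (hy : y ≠ 0) (c : ℝ) :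
    volume {x : EE n | ⟪x, y⟫ = c} = 0 := by
  by_cases hne : ∃ p : EE n, ⟪p, y⟫ = c
  · obtain ⟨p, hp⟩ := hne
    let A : AffineSubspace ℝ (EE n) := AffineSubspace.mk' p (LinearMap.ker (innerₛₗ ℝ y))
    have hA : A ≠ ⊤ := by
      intro h
      have : A.direction = ⊤ := by rw [h]; simp
      rw [AffineSubspace.direction_mk'] at this
      have h2 : y ∈ LinearMap.ker (innerₛₗ ℝ y) := by rw [this]; trivial
      simp at h2
      exact hy h2
    refine measure_mono_null ?_ (Measure.addHaar_affineSubspace volume A hA)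
    intro x hx
    have hx' : ⟪x, y⟫ = c := hx
    simp only [A, SetLike.mem_coe, AffineSubspace.mem_mk', LinearMap.mem_ker]
    simp [inner_sub_right, real_inner_comm x y, real_inner_comm p y, hx', hp]
  · have : {x : EE n | ⟪x, y⟫ = c} = ∅ := by
      ext x; simp; exact fun h => hne ⟨x, h⟩
    rw [this]; simp

lemma voronoi_both (n : ℕ) (L : Submodule ℤ (EE n)) (l : L) (w : EE n)
    (h1 : w ∈ voronoi n (L : Set (EE n))) (h2 : (l : EE n) + w ∈ voronoi n (L : Set (EE n))) :
    ⟪w, (l : EE n)⟫ = - ‖(l : EE n)‖ ^ 2 / 2 := by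
  have a := h1 (-l) (neg_mem l.2)
  have b := h2 l l.2
  rw [inner_add_left, real_inner_self_eq_norm_sq] at b
  rw [inner_neg_right, norm_neg] at a
  linarith

lemma voronoi_ae (n : ℕ) (L : Submodule ℤ (EE n)) [DiscreteTopology L]
    [IsZLattice ℝ L] :
    ∀ᵐ w : EE n, w ∈ voronoi n (L : Set (EE n)) →
      ∀ l : L, l ≠ 0 → (l : EE n) + w ∉ voronoi n (L : Set (EE n)) := by
  have : ∀ᵐ w : EE n, ∀ l : L, l ≠ 0 → ⟪w, (l : EE n)⟫ ≠ - ‖(l : EE n)‖ ^ 2 / 2 := by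
    rw [ae_all_iff]
    intro l
    by_cases hl : l = 0
    · simp [hl]
    · have := hyperplane_null n (l : EE n) (by simpa using hl) (- ‖(l : EE n)‖ ^ 2 / 2)
      have h2 := measure_eq_zero_iff_ae_notMem.1 this
      filter_upwards [h2] with w hw _
      exact hw
  filter_upwards [this] with w hw h1 l hl h2
  exact hw l hl (voronoi_both n L l w h1 h2)

lemma voronoi_cover (n : ℕ) (L : Submodule ℤ (EE n)) [DiscreteTopology L] (x : EE n) :
    ∃ l : L, (l : EE n) + x ∈ voronoi n (L : Set (EE n)) := by
  have H : IsClosed (X := EE n) L := @AddSubgroup.isClosed_of_discrete _ _ _ _ _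
    L.toAddSubgroup (inferInstanceAs (DiscreteTopology L))
  obtain ⟨p, hp, hd⟩ := H.exists_infDist_eq_dist ⟨0, L.zero_mem⟩ x
  refine ⟨⟨-p, neg_mem hp⟩, fun y hy => ?_⟩
  have h1 : dist x p ≤ dist x (p + y) := by
    rw [← hd]
    exact Metric.infDist_le_dist_of_mem (L.add_mem hp hy)
  rw [dist_eq_norm, dist_eq_norm, ← sub_sub] at h1
  have h2 := pow_le_pow_left₀ (norm_nonneg _) h1 2
  rw [norm_sub_sq_real (x - p) y] at h2
  have : ((⟨-p, neg_mem hp⟩ : L) : EE n) + x = x - p := by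
    simp [sub_eq_add_neg, add_comm]
  rw [this]
  linarith

lemma voronoi_fund (n : ℕ) (L : Submodule ℤ (EE n)) [DiscreteTopology L] :
    IsAddFundamentalDomain L (voronoi n (L : Set (EE n))) volume := by
  refine IsAddFundamentalDomain.mk'' (voronoi_meas n _).nullMeasurableSet
    (Eventually.of_forall (voronoi_cover n L)) ?_ ?_
  · intro l hl
    have h := hyperplane_null n (l : EE n) (by simpa using hl) (‖(l : EE n)‖ ^ 2 / 2)
    refine measure_mono_null ?_ h
    rintro x ⟨⟨w, hw, rfl⟩, h2⟩
    have h3 := voronoi_both n L l w hw h2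
    change ⟪(l : EE n) + w, (l : EE n)⟫ = _
    rw [inner_add_left, real_inner_self_eq_norm_sq, h3]
    ring
  · intro l
    exact (measurePreserving_add_left volume (l : EE n)).quasiMeasurePreserving

/-- Unfolding over the complement of the Voronoi cell. -/
lemma unfold_compl (n : ℕ) (L : Submodule ℤ (EE n)) [DiscreteTopology L]
    [IsZLattice ℝ L] (σ τ : ℝ) :
    ∫⁻ z in (voronoi n (L : Set (EE n)))ᶜ,
      ENNReal.ofReal (gaussF n σ z) * gMass n τ (L : Set (EE n)) z =
    ∫⁻ w in voronoi n (L : Set (EE n)),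
      gMass n σ ((L : Set (EE n)) \ {0}) w * gMass n τ (L : Set (EE n)) w := by
  have : Countable (L : Set (EE n)) := inferInstanceAs (Countable L)
  set V := voronoi n (L : Set (EE n)) with hV
  have hVm : MeasurableSet V := voronoi_meas n _
  set F : EE n → ℝ≥0∞ := fun z => ENNReal.ofReal (gaussF n σ z) * gMass n τ (L : Set (EE n)) z
    with hF
  have hFm : Measurable F :=
    (ENNReal.measurable_ofReal.comp (gaussF_cont n σ).measurable).mul (gMass_meas n τ _)
  have : VAddInvariantMeasure L (EE n) volume :=
    inferInstanceAs (VAddInvariantMeasure L.toAddSubgroup (EE n) volume)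
  rw [← lintegral_indicator hVm.compl, (voronoi_fund n L).lintegral_eq_tsum'']
  change ∑' l : L, ∫⁻ w in V, (Vᶜ.indicator F ∘ fun x => (l : EE n) + x) w = _
  rw [← lintegral_tsum (fun l : L => ((hFm.indicator hVm.compl).comp
    (measurable_const_add (l : EE n))).aemeasurable)]
  refine lintegral_congr_ae ?_
  filter_upwards [ae_restrict_of_ae (voronoi_ae n L), ae_restrict_mem hVm] with w hw hwV
  have key : ∀ l : L, (Vᶜ.indicator F ∘ fun x => (l : EE n) + x) w =
      ((L : Set (EE n)) \ {0}).indicator (fun x => ENNReal.ofReal (gaussF n σ (x + w))) l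
        * gMass n τ (L : Set (EE n)) w := by
    intro l
    change Vᶜ.indicator F ((l : EE n) + w) = _
    by_cases hl : l = 0
    · subst hl
      simp [hwV]
    · rw [Set.indicator_of_mem (show (l : EE n) + w ∈ Vᶜ from hw hwV l hl),
        Set.indicator_of_mem (show (l : EE n) ∈ (L : Set (EE n)) \ {0} from
          ⟨l.2, by simpa using hl⟩)]
      simp only [hF]
      rw [gMass_periodic]
  rw [tsum_congr key, ENNReal.tsum_mul_right]
  congr 1
  unfold gMass
  rw [tsum_subtype ((L : Set (EE n)) \ {0}) (fun x => ENNReal.ofReal (gaussF n σ (x + w)))]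
  refine (tsum_subtype (L : Set (EE n)) _).trans ?_
  rw [Set.indicator_indicator, Set.inter_eq_right.2 Set.sdiff_subset]

lemma lintegral_affine (n : ℕ) (a : ℝ) (ha : 0 < a) (c : EE n) (H : EE n → ℝ≥0∞)
    (hH : Measurable H) :
    ∫⁻ w, ENNReal.ofReal (a ^ n) * H (c + a • w) = ∫⁻ z, H z := by
  rw [lintegral_const_mul _ (by fun_prop)]
  have h1 : ∫⁻ w, H (c + a • w) = ∫⁻ z, H (c + z) ∂(Measure.map (a • ·) volume) := by
    rw [lintegral_map (by fun_prop) (by fun_prop)]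
  rw [h1, Measure.map_addHaar_smul volume ha.ne', lintegral_smul_measure,
    lintegral_add_left_eq_self, smul_eq_mul, ← mul_assoc, ← ENNReal.ofReal_mul (by positivity),
    finrank_euclideanSpace_fin, abs_of_pos (by positivity), mul_inv_cancel₀ (by positivity)]
  simp

lemma gauss_prod (n : ℕ) (σs σw : ℝ) (hσs : 0 < σs) (hσw : 0 < σw) (α σeff : ℝ)
    (hα : α = σs ^ 2 / (σs ^ 2 + σw ^ 2))
    (hσeff : σeff = Real.sqrt (σs ^ 2 * σw ^ 2 / (σs ^ 2 + σw ^ 2))) (x w : EE n) :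
    α ^ n * (gaussF n σeff ((α - 1) • x + α • w) *
      gaussF n (Real.sqrt α * σs) (x + ((α - 1) • x + α • w))) =
    gaussF n σs x * gaussF n σw w := by
  have hα0 : 0 < α := by rw [hα]; positivity
  have he2 : σeff ^ 2 = σs ^ 2 * σw ^ 2 / (σs ^ 2 + σw ^ 2) := by
    rw [hσeff, Real.sq_sqrt (by positivity)]
  have hb2 : (Real.sqrt α * σs) ^ 2 = α * σs ^ 2 := by
    rw [mul_pow, Real.sq_sqrt hα0.le]
  have hx : x + ((α - 1) • x + α • w) = α • (x + w) := by module
  rw [hx]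
  unfold gaussF
  rw [he2, hb2]
  have hconst : α ^ n * ((2 * π * (σs ^ 2 * σw ^ 2 / (σs ^ 2 + σw ^ 2))) ^ (-(n : ℝ) / 2) *
      (2 * π * (α * σs ^ 2)) ^ (-(n : ℝ) / 2)) =
      (2 * π * σs ^ 2) ^ (-(n : ℝ) / 2) * (2 * π * σw ^ 2) ^ (-(n : ℝ) / 2) := by
    have h1 : α ^ n = ((α ^ 2)⁻¹) ^ (-(n : ℝ) / 2) := by
      rw [Real.inv_rpow (by positivity), ← Real.rpow_neg (by positivity), ← Real.rpow_natCast α 2,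
        ← Real.rpow_mul hα0.le, ← Real.rpow_natCast]
      congr 1
      push_cast
      ring
    rw [h1, ← Real.mul_rpow (by positivity) (by positivity),
      ← Real.mul_rpow (by positivity) (by positivity),
      ← Real.mul_rpow (by positivity) (by positivity)]
    congr 1
    rw [hα]
    field_simp
  have hexp : -‖(α - 1) • x + α • w‖ ^ 2 / (2 * (σs ^ 2 * σw ^ 2 / (σs ^ 2 + σw ^ 2))) +
      -‖α • (x + w)‖ ^ 2 / (2 * (α * σs ^ 2)) =
      -‖x‖ ^ 2 / (2 * σs ^ 2) + -‖w‖ ^ 2 / (2 * σw ^ 2) := by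
    rw [norm_add_sq_real, norm_smul, norm_smul, norm_smul, mul_pow, mul_pow, mul_pow,
      norm_add_sq_real, Real.norm_eq_abs, Real.norm_eq_abs, sq_abs, sq_abs,
      real_inner_smul_left, real_inner_smul_right, hα]
    field_simp
    ring
  calc _ = (α ^ n * ((2 * π * (σs ^ 2 * σw ^ 2 / (σs ^ 2 + σw ^ 2))) ^ (-(n : ℝ) / 2) *
      (2 * π * (α * σs ^ 2)) ^ (-(n : ℝ) / 2))) *
      (Real.exp (-‖(α - 1) • x + α • w‖ ^ 2 / (2 * (σs ^ 2 * σw ^ 2 / (σs ^ 2 + σw ^ 2)))) *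
      Real.exp (-‖α • (x + w)‖ ^ 2 / (2 * (α * σs ^ 2)))) := by ring
    _ = _ := by
      rw [hconst, ← Real.exp_add, hexp, Real.exp_add]
      ring

/-- the MAP error probability satisfies
`P_e(Λ)·f_{σ_s}(Λ) = ∫_{V(Λ)} f_{σ_eff}((Λ∖{0})+w)·f_{√α·σ_s}(Λ+w) dw`. -/
theorem error_probability_integral_identity (n : ℕ) (L : Submodule ℤ (EuclideanSpace ℝ (Fin n)))
    [DiscreteTopology L] [IsZLattice ℝ L]
    (σs σw : ℝ) (hσs : 0 < σs) (hσw : 0 < σw)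
    (α σeff : ℝ)
    (hα : α = σs ^ 2 / (σs ^ 2 + σw ^ 2))
    (hσeff : σeff = Real.sqrt (σs ^ 2 * σw ^ 2 / (σs ^ 2 + σw ^ 2)))
    (Pe : ℝ)
    (hPe : Pe = ∑' x : (L : Set (EuclideanSpace ℝ (Fin n))),
        (gaussF n σs x / gaussMass n σs (L : Set (EuclideanSpace ℝ (Fin n)))) *
          ∫ w in {w : EuclideanSpace ℝ (Fin n) |
              (α - 1) • (x : EuclideanSpace ℝ (Fin n)) + α • w ∉ voronoi n (L : Set (EuclideanSpace ℝ (Fin n)))},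
            gaussF n σw w) :
    Pe * gaussMass n σs (L : Set (EuclideanSpace ℝ (Fin n))) =
      ∫ w in voronoi n (L : Set (EuclideanSpace ℝ (Fin n))),
        gaussMass n σeff (coset n ((L : Set (EuclideanSpace ℝ (Fin n))) \ {0}) w) *
          gaussMass n (Real.sqrt α * σs) (coset n (L : Set (EuclideanSpace ℝ (Fin n))) w) := by
  have hα0 : 0 < α := by rw [hα]; positivity
  have he0 : 0 < σeff := by rw [hσeff]; positivity
  have hb0 : 0 < Real.sqrt α * σs := by positivity
  have : Countable (L : Set (EE n)) := inferInstanceAs (Countable L)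
  have : Countable ((L : Set (EE n)) \ {0} : Set (EE n)) :=
    ((Set.to_countable (L : Set (EE n))).mono Set.sdiff_subset).to_subtype
  have hVm : MeasurableSet (voronoi n (L : Set (EE n))) := voronoi_meas n _
  have hsum : Summable fun x : (L : Set (EE n)) => gaussF n σs x := by
    simpa using summable_gaussF n L σs hσs 0
  have hM : 0 < gaussMass n σs (L : Set (EE n)) :=
    hsum.tsum_pos (fun x => gaussF_nonneg n σs x) ⟨0, L.zero_mem⟩ (gaussF_pos n σs hσs _)
  -- right-hand side
  simp only [gaussMass_eq, ← ENNReal.toReal_mul]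
  have hGm : Measurable fun w => gMass n σeff ((L : Set (EE n)) \ {0}) w *
      gMass n (Real.sqrt α * σs) (L : Set (EE n)) w :=
    (gMass_meas n _ _).mul (gMass_meas n _ _)
  rw [integral_toReal hGm.aemeasurable
    (Eventually.of_forall fun w => ENNReal.mul_lt_top
      ((gMass_mono n σeff Set.sdiff_subset w).trans_lt (gMass_ne_top n L σeff he0 w).lt_top)
      (gMass_ne_top n L _ hb0 w).lt_top)]
  rw [← unfold_compl]
  -- left-hand side
  have hterm : ∀ x : (L : Set (EE n)), gaussF n σs x * ∫ w in {w : EuclideanSpace ℝ (Fin n) |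
              (α - 1) • (x : EuclideanSpace ℝ (Fin n)) + α • w ∉ voronoi n (L : Set (EuclideanSpace ℝ (Fin n)))},
            gaussF n σw w = (∫⁻ z in (voronoi n (L : Set (EE n)))ᶜ,
        ENNReal.ofReal (gaussF n σeff z) *
          ENNReal.ofReal (gaussF n (Real.sqrt α * σs) (x + z))).toReal := by
    intro x
    have hcm : Measurable fun w : EE n => (α - 1) • (x : EE n) + α • w := by fun_prop
    have hSm : MeasurableSet {w : EE n | (α - 1) • (x : EE n) + α • w ∉
        voronoi n (L : Set (EE n))} := hcm hVm.compl
    have m1 := (gaussF_cont n σeff).measurable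
    have m2 := (gaussF_cont n (Real.sqrt α * σs)).measurable
    have m3 := (gaussF_cont n σw).measurable
    rw [integral_eq_lintegral_of_nonneg_ae (Eventually.of_forall fun w => gaussF_nonneg n σw w)
      m3.aestronglyMeasurable]
    rw [← ENNReal.toReal_ofReal (gaussF_nonneg n σs x), ← ENNReal.toReal_mul]
    congr 1
    rw [← lintegral_const_mul _ (by fun_prop), ← lintegral_indicator hSm,
      ← lintegral_indicator hVm.compl]
    rw [← lintegral_affine n α hα0 ((α - 1) • (x : EE n)) _
      (Measurable.indicator (by fun_prop) hVm.compl)]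
    refine lintegral_congr fun w => ?_
    by_cases hw : (α - 1) • (x : EE n) + α • w ∈ voronoi n (L : Set (EE n))
    · simp [hw]
    · rw [Set.indicator_of_mem (by exact hw), Set.indicator_of_mem (by exact hw),
        ← ENNReal.ofReal_mul (gaussF_nonneg n σs x),
        ← ENNReal.ofReal_mul (gaussF_nonneg _ _ _), ← ENNReal.ofReal_mul (by positivity),
        gauss_prod n σs σw hσs hσw α σeff hα hσeff]
  rw [hPe, ← tsum_mul_right]
  have hterm2 : ∀ x : (L : Set (EE n)),
      (gaussF n σs x / gaussMass n σs (L : Set (EuclideanSpace ℝ (Fin n)))) *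
          (∫ w in {w : EuclideanSpace ℝ (Fin n) |
              (α - 1) • (x : EuclideanSpace ℝ (Fin n)) + α • w ∉ voronoi n (L : Set (EuclideanSpace ℝ (Fin n)))},
            gaussF n σw w) * gaussMass n σs (L : Set (EE n)) = (∫⁻ z in (voronoi n (L : Set (EE n)))ᶜ,
        ENNReal.ofReal (gaussF n σeff z) *
          ENNReal.ofReal (gaussF n (Real.sqrt α * σs) (x + z))).toReal := by
    intro x
    rw [← hterm x]
    field_simp
  rw [tsum_congr hterm2, ← ENNReal.tsum_toReal_eq]
  · congr 1
    have m1 := (gaussF_cont n σeff).measurable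
    have m2 := (gaussF_cont n (Real.sqrt α * σs)).measurable
    rw [← lintegral_tsum (fun x => by fun_prop)]
    simp only [ENNReal.tsum_mul_left]
    rfl
  · intro x
    have m1 := (gaussF_cont n σeff).measurable
    refine ne_top_of_le_ne_top ?_ ((setLIntegral_le_lintegral _ _).trans
      (lintegral_mono fun z => mul_le_mul_right
        (ENNReal.ofReal_le_ofReal (gaussF_le n (Real.sqrt α * σs) (x + z))) _))
    rw [lintegral_mul_const _ (by fun_prop)]
    refine ENNReal.mul_ne_top ?_ ENNReal.ofReal_ne_top
    exact (gaussF_integrable n σeff he0).lintegral_lt_top.ne
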